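/- In L_spc, every K-program can be rewritten into a unique minimal K-program: for each K-program P there is exactly one minimal first canonical K-form P' such that P = P' is derivable in L_spc. Consequently, single-pass congruence of K-programs is decidable (assuming decidable equality on the set A of basic instructions). -/

import Mathlib

/-- Primitive instructions over a set `A` of basic instructions:
basic instructions `a`, positive tests `+a`, negative tests `-a`,
jump instructions `#k` and the termination instruction `!`. -/
inductive PrimInstr (A : Type) : Type where
  | basic (a : A)
  | pos (a : A)
  | neg (a : A)
  | jump (k : Nat)
  | halt
deriving DecidableEq

/-- Instructions of the semigroup `L`: primitive instructions and
repeat instructions (repeaters) `↰n`.  (Genuine repeaters have `n ≥ 1`;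
this is imposed as a hypothesis wherever relevant.) -/
inductive Instr (A : Type) : Type where
  | prim (u : PrimInstr A)
  | rep (n : Nat)
deriving DecidableEq

/-- Is this instruction a repeater? -/
def Instr.isRep {A : Type} : Instr A → Bool
  | .rep _ => true
  | .prim _ => false

/-- `↰n` is a genuine repeat instruction only for `n ≥ 1`. -/
def Instr.valid {A : Type} : Instr A → Prop
  | .prim _ => True
  | .rep n => 1 ≤ n

/-- Terms of the semigroup `L`: finite nonempty sequences of instructions
under (associative) concatenation. -/
inductive LTerm (A : Type) : Type where
  | instr (i : Instr A)
  | seq (s t : LTerm A)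
deriving DecidableEq

/-- The (nonempty) sequence of instructions an `L`-term consists of. -/
def LTerm.flat {A : Type} : LTerm A → List (Instr A)
  | .instr i => [i]
  | .seq s t => s.flat ++ t.flat

/-- `cat [i_1, …, i_n] t` is the `L`-term `i_1 ; … ; i_n ; t`. -/
def cat {A : Type} : List (Instr A) → LTerm A → LTerm A
  | [], t => t
  | i :: l, t => (LTerm.instr i).seq (cat l t)

/-- `pcat [u_1, …, u_n] t` is the `L`-term `u_1 ; … ; u_n ; t`
for primitive instructions `u_i`. -/
def pcat {A : Type} (l : List (PrimInstr A)) (t : LTerm A) : LTerm A :=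
  cat (l.map Instr.prim) t

/-- `listPow l m` is the `m`-fold concatenation `l^m` of the list `l`. -/
def listPow {α : Type} (l : List α) : ℕ → List α
  | 0 => []
  | n+1 => l ++ listPow l n

/-- The primitive instructions occurring in an instruction sequence. -/
def primsOf {A : Type} (l : List (Instr A)) : List (PrimInstr A) :=
  l.filterMap fun i => match i with
    | .prim u => some u
    | .rep _ => none

/-- The counter of the final repeat instruction of an instruction sequence, if any. -/
def repOf {A : Type} (l : List (Instr A)) : Option ℕ :=
  match l.getLast? with
  | some (.rep n) => some n
  | _ => none

/-- Position lookup for the SPI denoted by `u_1 ; … ; u_k ; ↰n` (`us` the list of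
the `u_i`): positions beyond the end wrap around through the last `n` instructions. -/
def kAt {A : Type} (us : List (PrimInstr A)) (n : ℕ) (p : ℕ) : Option (PrimInstr A) :=
  if p < us.length then us[p]?
  else us[us.length - n + (p - (us.length - n)) % n]?

/-- The SPI denoted by a `K`-program, given as position lookup on its
instruction sequence: a repeater-free `K`-program `u_1 ; … ; u_n` denotes
`u_1 ; … ; u_n` and `u_1 ; … ; u_k ; ↰n` (`n ≤ k`) denotes `u_1 ; … ; u_{k-n}`
followed by the infinite repetition of `u_{k-n+1} ; … ; u_k`. -/
def kDen {A : Type} (l : List (Instr A)) : ℕ → Option (PrimInstr A) :=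
  match repOf l with
  | none => fun p => (primsOf l)[p]?
  | some n => kAt (primsOf l) n

/-- `K`-programs: first canonical `L`-forms `u_1 ; … ; u_k` (all `u_i`
primitive), or `u_1 ; … ; u_k ; ↰n` with `1 ≤ n ≤ k`. -/
def IsKProg {A : Type} (t : LTerm A) : Prop :=
  (∃ (u : PrimInstr A) (us : List (PrimInstr A)), t.flat = (u :: us).map Instr.prim) ∨
  (∃ (u : PrimInstr A) (us : List (PrimInstr A)) (n : ℕ),
     t.flat = (u :: us).map Instr.prim ++ [Instr.rep n] ∧ 1 ≤ n ∧ n ≤ (u :: us).length)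

/-- The proof system `L_spc`: equational-logic derivability from the axioms (1)-(4) for single-pass congruence on `L` (associativity, unfolding of repeat counters, absorption `↰n ; X = ↰n`, and rotation), where `u_i`, `v_j` range over primitive instructions and `m, n ≥ 1`. -/
inductive DerivLspc {{A : Type}} : LTerm A → LTerm A → Prop
  | refl (t : LTerm A) : DerivLspc t t
  | symm {{s t : LTerm A}} : DerivLspc s t → DerivLspc t s
  | trans {{s t u : LTerm A}} : DerivLspc s t → DerivLspc t u → DerivLspc s u
  | seq_congr {{s s' t t' : LTerm A}} : DerivLspc s s' → DerivLspc t t' → DerivLspc (s.seq t) (s'.seq t')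
  | assoc (s t u : LTerm A) : DerivLspc ((s.seq t).seq u) (s.seq (t.seq u))
  | ax2 (u : PrimInstr A) (us : List (PrimInstr A)) (m : ℕ) (hm : 1 ≤ m) :
      DerivLspc (pcat (u :: us) (.instr (.rep (u :: us).length)))
          (pcat (listPow (u :: us) m) (.instr (.rep (m * (u :: us).length))))
  | ax3 (n : ℕ) (hn : 1 ≤ n) (t : LTerm A) :
      DerivLspc ((LTerm.instr (.rep n)).seq t) (.instr (.rep n))
  | ax4 (u : PrimInstr A) (us : List (PrimInstr A)) (v : PrimInstr A) (vs : List (PrimInstr A)) :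
      DerivLspc
        (pcat ((u :: us) ++ (v :: vs)) (.instr (.rep ((u :: us).length + (v :: vs).length))))
        (pcat ((u :: us) ++ (v :: vs) ++ (u :: us)) (.instr (.rep ((u :: us).length + (v :: vs).length))))

/-- The repetition-free `L`-term `u_1 ; … ; u_n` (junk for the empty list,
which never occurs under the hypotheses used). -/
def ofPrims {A : Type} : List (PrimInstr A) → LTerm A
  | [] => .instr (.rep 1)
  | [u] => .instr (.prim u)
  | u :: v :: l => (LTerm.instr (.prim u)).seq (ofPrims (v :: l))

/-- The canonical `L`-term determined by the data of a first canonical `K`-form: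
a list of primitive instructions and an optional final repeat counter. -/
def ofData {A : Type} (us : List (PrimInstr A)) : Option ℕ → LTerm A
  | none => ofPrims us
  | some n => pcat us (.instr (.rep n))

/-- The data `(us, r)` describes a first canonical `K`-form: `us` is nonempty
and, if a repeater `↰n` is present, `1 ≤ n ≤ k` where `k` is the number of
preceding primitive instructions. -/
def IsKData {A : Type} (c : List (PrimInstr A) × Option ℕ) : Prop :=
  c.1 ≠ [] ∧
  match c.2 with
  | none => True
  | some n => 1 ≤ n ∧ n ≤ c.1.length

/-- The instruction sequence (flattening) of the `K`-form described by data `(us, r)`. -/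
def flatData {A : Type} (c : List (PrimInstr A) × Option ℕ) : List (Instr A) :=
  c.1.map Instr.prim ++ (match c.2 with
    | none => []
    | some n => [Instr.rep n])

/-- The number of instructions of the `K`-form described by data `(us, r)`. -/
def dataSize {A : Type} (c : List (PrimInstr A) × Option ℕ) : ℕ :=
  c.1.length + (match c.2 with
    | none => 0
    | some _ => 1)

/-- Minimal first canonical `K`-forms: a repeater-free `K`-program is minimal by
definition; `u_1 ; … ; u_k ; ↰n` is minimal if its repeating part
`u_{k-n+1} ; … ; u_k` cannot be made smaller with axiom (2) (it is not a proper
power of a shorter sequence) and its non-repeating part `u_1 ; … ; u_{k-n}`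
cannot be made smaller with axiom (4) (no nonempty suffix of the non-repeating
part coincides with the corresponding suffix of the repeating part). -/
def MinKData {A : Type} (c : List (PrimInstr A) × Option ℕ) : Prop :=
  match c.2 with
  | none => True
  | some n =>
      (¬ ∃ m, 1 ≤ m ∧ m ≤ c.1.length - n ∧
          (c.1.take (c.1.length - n)).drop (c.1.length - n - m) =
            (c.1.drop (c.1.length - n)).drop (n - m)) ∧
      (¬ ∃ (m : ℕ) (s : List (PrimInstr A)), 2 ≤ m ∧ c.1.drop (c.1.length - n) = listPow s m)

namespace KForm

variable {A : Type}

/-- right-nested term of a list -/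
def toT : List (Instr A) → LTerm A
  | [] => .instr (.rep 1)
  | [i] => .instr i
  | i :: j :: l => (LTerm.instr i).seq (toT (j :: l))

theorem flat_ne (t : LTerm A) : t.flat ≠ [] := by
  induction t with
  | instr i => simp [LTerm.flat]
  | seq s t ih _ => simp [LTerm.flat, ih]

theorem toT_append (l₁ l₂ : List (Instr A)) (h₁ : l₁ ≠ []) (h₂ : l₂ ≠ []) :
    DerivLspc ((toT l₁).seq (toT l₂)) (toT (l₁ ++ l₂)) := by
  induction l₁ with
  | nil => exact absurd rfl h₁
  | cons i l ih =>
    cases l with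
    | nil =>
      cases l₂ with
      | nil => exact absurd rfl h₂
      | cons j l₂ => exact .refl _
    | cons j l =>
      exact .trans (.assoc _ _ _) (.seq_congr (.refl _) (ih (by simp)))

theorem deriv_toT (t : LTerm A) : DerivLspc t (toT t.flat) := by
  induction t with
  | instr i => exact .refl _
  | seq s t ihs iht =>
    exact .trans (.seq_congr ihs iht) (toT_append _ _ (flat_ne s) (flat_ne t))

theorem deriv_of_flat {s t : LTerm A} (h : s.flat = t.flat) : DerivLspc s t :=
  .trans (deriv_toT s) (h ▸ .symm (deriv_toT t))

theorem flat_cat (l : List (Instr A)) (t : LTerm A) : (cat l t).flat = l ++ t.flat := by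
  induction l with
  | nil => rfl
  | cons i l ih => simp [cat, LTerm.flat, ih]

theorem flat_pcat (l : List (PrimInstr A)) (t : LTerm A) :
    (pcat l t).flat = l.map Instr.prim ++ t.flat := flat_cat _ _

theorem flat_ofPrims (l : List (PrimInstr A)) (h : l ≠ []) :
    (ofPrims l).flat = l.map Instr.prim := by
  induction l with
  | nil => exact absurd rfl h
  | cons u l ih =>
    cases l with
    | nil => rfl
    | cons v l => simp [ofPrims, LTerm.flat, ih (by simp)]

theorem flat_ofData (c : List (PrimInstr A) × Option ℕ) (h : c.1 ≠ []) :
    (ofData c.1 c.2).flat = flatData c := by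
  obtain ⟨us, r⟩ := c
  cases r with
  | none => simp [ofData, flatData, flat_ofPrims us h]
  | some n => simp [ofData, flatData, flat_pcat, LTerm.flat]

def dataL : List (Instr A) → List (PrimInstr A) × Option ℕ
  | [] => ([], none)
  | .prim u :: l => (u :: (dataL l).1, (dataL l).2)
  | .rep n :: _ => ([], some n)

def comb (c d : List (PrimInstr A) × Option ℕ) : List (PrimInstr A) × Option ℕ :=
  match c.2 with
  | some _ => c
  | none => (c.1 ++ d.1, d.2)

theorem dataL_append (l₁ l₂ : List (Instr A)) :
    dataL (l₁ ++ l₂) = comb (dataL l₁) (dataL l₂) := by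
  induction l₁ with
  | nil => simp [dataL, comb]
  | cons i l ih =>
    cases i with
    | rep n => simp [dataL, comb]
    | prim u =>
      simp only [List.cons_append, dataL, ih, comb]
      cases h : (dataL l).2 <;> simp [h]

theorem dataL_map (us : List (PrimInstr A)) : dataL (us.map Instr.prim) = (us, none) := by
  induction us with
  | nil => rfl
  | cons u us ih => simp [dataL, ih]

theorem dataL_rep (us : List (PrimInstr A)) (n : ℕ) :
    dataL (us.map Instr.prim ++ [Instr.rep n]) = (us, some n) := by
  rw [dataL_append, dataL_map]; simp [comb, dataL]

theorem dataL_flatData (c : List (PrimInstr A) × Option ℕ) : dataL (flatData c) = c := by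
  obtain ⟨us, r⟩ := c
  cases r with
  | none => simp [flatData, dataL_map]
  | some n => simp only [flatData, dataL_rep]

/-- Semantic congruence on data. -/
def Rel (c d : List (PrimInstr A) × Option ℕ) : Prop :=
  c = d ∨ ∃ n m, c.2 = some n ∧ d.2 = some m ∧ 1 ≤ n ∧ n ≤ c.1.length ∧ 1 ≤ m ∧
    m ≤ d.1.length ∧ kAt c.1 n = kAt d.1 m

theorem Rel.symm {c d : List (PrimInstr A) × Option ℕ} (h : Rel c d) : Rel d c := by
  rcases h with h | ⟨n, m, h1, h2, h3, h4, h5, h6, h7⟩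
  · exact .inl h.symm
  · exact .inr ⟨m, n, h2, h1, h5, h6, h3, h4, h7.symm⟩

theorem Rel.trans {c d e : List (PrimInstr A) × Option ℕ} (h : Rel c d) (h' : Rel d e) :
    Rel c e := by
  rcases h with rfl | ⟨n, m, h1, h2, h3, h4, h5, h6, h7⟩
  · exact h'
  · rcases h' with rfl | ⟨n', m', g1, g2, g3, g4, g5, g6, g7⟩
    · exact .inr ⟨n, m, h1, h2, h3, h4, h5, h6, h7⟩
    · obtain rfl : m = n' := by rw [h2] at g1; simpa using g1
      exact .inr ⟨n, m', h1, g2, h3, h4, g5, g6, h7.trans g7⟩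

theorem kAt_append (X us : List (PrimInstr A)) (n p : ℕ) (hn : n ≤ us.length) :
    kAt (X ++ us) n p = if p < X.length then X[p]? else kAt us n (p - X.length) := by
  unfold kAt
  rw [List.length_append]
  by_cases h : p < X.length
  · rw [if_pos (by omega), if_pos h, List.getElem?_append_left h]
  · rw [if_neg h]
    by_cases h2 : p < X.length + us.length
    · rw [if_pos h2, if_pos (by omega), List.getElem?_append_right (by omega)]
    · rw [if_neg h2, if_neg (by omega), List.getElem?_append_right (by omega)]
      congr 1
      have : p - (X.length + us.length - n) = p - X.length - (us.length - n) := by omega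
      rw [this]; omega

theorem kAt_lt (us : List (PrimInstr A)) (n p : ℕ) (h : p < us.length) :
    kAt us n p = us[p]? := by simp [kAt, h]

theorem kAt_ge (us : List (PrimInstr A)) (n p : ℕ) (hn : n ≤ us.length)
    (h : us.length - n ≤ p) :
    kAt us n p = us[us.length - n + (p - (us.length - n)) % n]? := by
  unfold kAt
  split_ifs with h1
  · rw [Nat.mod_eq_of_lt (by omega)]; congr 1; omega
  · rfl

theorem kAt_per (us : List (PrimInstr A)) (n p : ℕ) (hn : n ≤ us.length)
    (h : us.length - n ≤ p) : kAt us n (p + n) = kAt us n p := by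
  rw [kAt_ge us n p hn h, kAt_ge us n (p+n) hn (by omega)]
  have : p + n - (us.length - n) = p - (us.length - n) + n := by omega
  rw [this, Nat.add_mod_right]

theorem per_mul {α : Type} {f : ℕ → α} {a n : ℕ} (h : ∀ p, a ≤ p → f (p + n) = f p) (k : ℕ) :
    ∀ p, a ≤ p → f (p + n * k) = f p := by
  induction k with
  | zero => simp
  | succ k ih =>
    intro p hp
    rw [Nat.mul_succ, ← Nat.add_assoc, h _ (by omega), ih p hp]

theorem eq_of_agree {α : Type} {f g : ℕ → α} {a n : ℕ} (hn : 1 ≤ n)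
    (hf : ∀ p, a ≤ p → f (p + n) = f p) (hg : ∀ p, a ≤ p → g (p + n) = g p)
    (h : ∀ p, p < a + n → f p = g p) : f = g := by
  funext p
  induction p using Nat.strong_induction_on with
  | _ p ih =>
    by_cases hp : p < a + n
    · exact h p hp
    · have e : p = (p - n) + n := by omega
      rw [e, hf _ (by omega), hg _ (by omega)]
      exact ih _ (by omega)

theorem listPow_length {α : Type} (l : List α) (m : ℕ) : (listPow l m).length = m * l.length := by
  induction m with
  | zero => simp [listPow]
  | succ m ih => simp [listPow, ih]; ring

theorem listPow_get {α : Type} (l : List α) (m i : ℕ) (h : i < m * l.length) :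
    (listPow l m)[i]? = l[i % l.length]? := by
  induction m generalizing i with
  | zero => simp at h
  | succ m ih =>
    rw [listPow]
    by_cases hi : i < l.length
    · rw [List.getElem?_append_left hi, Nat.mod_eq_of_lt hi]
    · rw [List.getElem?_append_right (by omega), ih _ (by rw [Nat.succ_mul] at h; omega)]
      congr 1
      rw [← Nat.mod_eq_sub_mod (by omega)]

theorem rel_ax2 (l : List (PrimInstr A)) (hl : 1 ≤ l.length) (m : ℕ) (hm : 1 ≤ m) :
    kAt l l.length = kAt (listPow l m) (m * l.length) := by
  have hpos : 1 ≤ m * l.length := Nat.mul_pos hm hl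
  funext p
  rw [kAt_ge _ _ _ le_rfl (by omega), kAt_ge _ _ _ (listPow_length l m).ge
    (by rw [listPow_length]; omega), listPow_length]
  simp only [Nat.sub_self, Nat.zero_add, Nat.sub_zero]
  rw [listPow_get _ _ _ (Nat.mod_lt _ hpos), Nat.mod_mod_of_dvd _ (Dvd.intro_left m rfl)]

theorem rel_ax4 (u v : List (PrimInstr A)) (hu : 1 ≤ u.length) :
    kAt (u ++ v) (u.length + v.length) = kAt (u ++ v ++ u) (u.length + v.length) := by
  apply eq_of_agree (a := u.length) (n := u.length + v.length) (by omega)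
  · intro p hp; exact kAt_per _ _ _ (by simp) (by simp)
  · intro p hp
    exact kAt_per _ _ _ (by simp) (by simp; omega)
  · intro p hp
    rw [kAt_lt (u ++ v ++ u) _ _ (by simp; omega)]
    by_cases h : p < u.length + v.length
    · rw [kAt_lt _ _ _ (by simpa using h), List.getElem?_append_left (l₁ := u ++ v) (by simpa using h)]
    · obtain ⟨q, rfl⟩ : ∃ q, p = q + (u.length + v.length) := ⟨p - (u.length + v.length), by omega⟩
      rw [kAt_per _ _ _ (by simp) (by simp), kAt_lt _ _ _ (by simp; omega),
        List.getElem?_append_left (by omega), List.getElem?_append_right (by simp)]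
      simp

theorem rel_comb {c c' d d' : List (PrimInstr A) × Option ℕ} (h : Rel c c') (h' : Rel d d') :
    Rel (comb c d) (comb c' d') := by
  rcases h with rfl | ⟨n, m, h1, h2, h3⟩
  · obtain ⟨us, r⟩ := c
    cases r with
    | some n => exact .inl rfl
    | none =>
      rcases h' with rfl | ⟨n, m, h1, h2, h3, h4, h5, h6, h7⟩
      · exact .inl rfl
      · refine .inr ⟨n, m, h1, h2, h3, ?_, h5, ?_, ?_⟩
        · simp [comb]; omega
        · simp [comb]; omega
        · funext p
          simp only [comb]
          rw [kAt_append _ _ _ _ h4, kAt_append _ _ _ _ h6, h7]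
  · have e1 : comb c d = c := by simp [comb, h1]
    have e2 : comb c' d' = c' := by simp [comb, h2]
    rw [e1, e2]
    exact .inr ⟨n, m, h1, h2, h3⟩

theorem sound {s t : LTerm A} (h : DerivLspc s t) : Rel (dataL s.flat) (dataL t.flat) := by
  induction h with
  | refl t => exact .inl rfl
  | symm _ ih => exact ih.symm
  | trans _ _ ih1 ih2 => exact ih1.trans ih2
  | seq_congr _ _ ih1 ih2 =>
    simp only [LTerm.flat, dataL_append]; exact rel_comb ih1 ih2
  | assoc s t u => left; simp [LTerm.flat]
  | ax2 u us m hm =>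
    simp only [flat_pcat, LTerm.flat, dataL_rep]
    refine .inr ⟨_, _, rfl, rfl, by simp, le_rfl, Nat.mul_pos hm (by simp),
      (listPow_length _ _).ge, rel_ax2 _ (by simp) m hm⟩
  | ax3 n hn t => left; simp [LTerm.flat, dataL]
  | ax4 u us v vs =>
    simp only [flat_pcat, LTerm.flat, dataL_rep]
    refine .inr ⟨_, _, rfl, rfl, by simp; omega, by simp; omega, by simp; omega, by simp; omega,
      rel_ax4 _ _ (by simp)⟩

theorem per_gcd {α : Type} {f : ℕ → α} (n m a : ℕ)
    (h1 : ∀ p, a ≤ p → f (p + n) = f p) (h2 : ∀ p, a ≤ p → f (p + m) = f p) :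
    ∀ p, a ≤ p → f (p + Nat.gcd n m) = f p := by
  induction n, m using Nat.gcd.induction with
  | H0 m => simpa using h2
  | H1 n m hn ih =>
    rw [Nat.gcd_rec]
    refine ih ?_ h1
    intro p hp
    have := per_mul h1 (m / n) (p + m % n) (by omega)
    rw [← this, Nat.add_assoc, Nat.mod_add_div, h2 p hp]

theorem start_le {α : Type} {f : ℕ → α} {a b n m : ℕ} (hn : 1 ≤ n) (hm : 1 ≤ m)
    (h1 : ∀ p, a ≤ p → f (p + n) = f p) (h2 : ∀ p, b ≤ p → f (p + m) = f p)
    (hmin : 1 ≤ b → f (b - 1) ≠ f (b - 1 + m)) : b ≤ a := by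
  by_contra hlt
  push Not at hlt
  apply hmin (by omega)
  have e1 := per_mul h1 m (b - 1) (by omega)
  have e2 := per_mul h2 (n - 1) (b - 1 + m) (by omega)
  rw [← e1, ← e2]
  congr 1
  obtain ⟨k, rfl⟩ : ∃ k, n = k + 1 := ⟨n - 1, by omega⟩
  simp only [Nat.add_sub_cancel]
  ring

theorem min_start {us : List (PrimInstr A)} {n : ℕ} (hn : 1 ≤ n) (hk : n ≤ us.length)
    (hm : MinKData (us, some n)) (hb : 1 ≤ us.length - n) :
    kAt us n (us.length - n - 1) ≠ kAt us n (us.length - n - 1 + n) := by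
  intro h
  rw [kAt_lt _ _ _ (by omega), kAt_lt _ _ _ (by omega)] at h
  apply hm.1
  refine ⟨1, le_rfl, hb, ?_⟩
  apply List.ext_getElem?
  intro i
  simp only [List.getElem?_drop, List.getElem?_take]
  cases i with
  | zero =>
    rw [if_pos (by omega)]
    simp only [Nat.add_zero]
    rw [h]; congr 1; omega
  | succ i =>
    rw [if_neg (by omega), List.getElem?_eq_none (by omega)]

theorem min_per {us : List (PrimInstr A)} {n d : ℕ} (hn : 1 ≤ n) (hk : n ≤ us.length)
    (hm : MinKData (us, some n)) (hd : d ∣ n)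
    (hp : ∀ p, us.length - n ≤ p → kAt us n (p + d) = kAt us n p) : d = n := by
  obtain ⟨k, rfl⟩ := hd
  by_contra hne
  have hd0 : 1 ≤ d := Nat.pos_of_mul_pos_right hn
  have hk0 : 1 ≤ k := Nat.pos_of_mul_pos_left hn
  have hk2 : 2 ≤ k := by
    rcases Nat.lt_or_ge k 2 with h | h
    · obtain rfl : k = 1 := by omega
      simp at hne
    · exact h
  apply hm.2
  have hdn : d ≤ d * k := Nat.le_mul_of_pos_right _ hk0
  set a := us.length - d * k with ha
  have hlen : ((us.drop a).take d).length = d := by simp; omega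
  refine ⟨k, (us.drop a).take d, hk2, ?_⟩
  apply List.ext_getElem?
  intro i
  change (us.drop a)[i]? = _
  by_cases hi : i < k * d
  · have hi' : i < d * k := by rwa [Nat.mul_comm]
    rw [listPow_get _ _ _ (by rwa [hlen]), hlen, List.getElem?_take, if_pos (Nat.mod_lt _ hd0)]
    simp only [List.getElem?_drop]
    have hmod := Nat.mod_le i d
    rw [← kAt_lt us (d * k) _ (by omega), ← kAt_lt us (d * k) _ (by omega)]
    rw [← per_mul hp (i / d) (a + i % d) (by omega), Nat.add_assoc, Nat.mod_add_div]
  · rw [List.getElem?_eq_none, List.getElem?_eq_none]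
    · rw [listPow_length, hlen]; omega
    · rw [List.length_drop]; rw [Nat.mul_comm] at hi; omega

theorem min_unique {us vs : List (PrimInstr A)} {n m : ℕ} (hn : 1 ≤ n) (hk : n ≤ us.length)
    (hm : 1 ≤ m) (hk' : m ≤ vs.length) (h1 : MinKData (us, some n)) (h2 : MinKData (vs, some m))
    (h : kAt us n = kAt vs m) : us = vs ∧ n = m := by
  have p1 := fun p => kAt_per us n p hk
  have p2 := fun p => kAt_per vs m p hk'
  have s1 := min_start hn hk h1
  have s2 := min_start hm hk' h2
  have q1 := fun (d : ℕ) => min_per (d := d) hn hk h1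
  have q2 := fun (d : ℕ) => min_per (d := d) hm hk' h2
  have hab : us.length - n = vs.length - m := by
    apply le_antisymm
    · exact start_le hm hn (h ▸ p2) p1 s1
    · exact start_le hn hm (h ▸ p1) p2 s2
  have g1 := per_gcd n m _ p1 (by rw [h, hab]; exact p2)
  have e1 := q1 _ (Nat.gcd_dvd_left n m) g1
  have e2 := q2 _ (Nat.gcd_dvd_right n m) (by rw [← h, ← hab]; exact g1)
  have hnm : n = m := by omega
  refine ⟨?_, hnm⟩
  apply List.ext_getElem?
  intro i
  by_cases hi : i < us.length
  · rw [← kAt_lt us n i hi, ← kAt_lt vs m i (by omega), h]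
  · rw [List.getElem?_eq_none (by omega), List.getElem?_eq_none (by omega)]

/-- `X ; Y ; ↰n` -/
abbrev T (us : List (PrimInstr A)) (n : ℕ) : LTerm A := pcat us (.instr (.rep n))

theorem deriv_prefix (X : List (PrimInstr A)) {s t : LTerm A} (h : DerivLspc s t) :
    DerivLspc (pcat X s) (pcat X t) := by
  induction X with
  | nil => exact h
  | cons u X ih => exact .seq_congr (.refl _) ih

theorem T_append (X Y : List (PrimInstr A)) (n : ℕ) : T (X ++ Y) n = pcat X (T Y n) := by
  simp only [T, pcat]
  induction X with
  | nil => rfl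
  | cons u X ih => simp only [List.cons_append, List.map_cons, cat, ih]

theorem d_ax2 (s : List (PrimInstr A)) (hs : s ≠ []) (m : ℕ) (hm : 1 ≤ m) :
    DerivLspc (T s s.length) (T (listPow s m) (m * s.length)) := by
  cases s with
  | nil => exact absurd rfl hs
  | cons u us => exact .ax2 u us m hm

theorem d_ax4 (Y Z : List (PrimInstr A)) (hY : Y ≠ []) :
    DerivLspc (T (Y ++ Z) (Y.length + Z.length)) (T (Y ++ Z ++ Y) (Y.length + Z.length)) := by
  cases Y with
  | nil => exact absurd rfl hY
  | cons u us =>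
    cases Z with
    | cons v vs => exact .ax4 u us v vs
    | nil =>
      have a := d_ax2 (u :: us) hY 2 (by omega)
      have b : DerivLspc (T ((u :: us) ++ (u :: us)) ((u :: us).length + (u :: us).length)) _ :=
        .ax4 u us u us
      have e : listPow (u :: us) 2 = (u :: us) ++ (u :: us) := by simp [listPow]
      rw [e, Nat.two_mul] at a
      have c := deriv_prefix (u :: us) a
      rw [← T_append, ← T_append, ← List.append_assoc] at c
      simpa using (a.trans b).trans c.symm

theorem exists_min (us : List (PrimInstr A)) (n : ℕ) (hn : 1 ≤ n) (hk : n ≤ us.length) :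
    ∃ vs m, 1 ≤ m ∧ m ≤ vs.length ∧ MinKData (vs, some m) ∧ DerivLspc (T us n) (T vs m) := by
  induction hl : us.length using Nat.strong_induction_on generalizing us n with
  | _ k ih =>
    subst hl
    by_cases c1 : ∃ m, 1 ≤ m ∧ m ≤ us.length - n ∧
          (us.take (us.length - n)).drop (us.length - n - m) =
            (us.drop (us.length - n)).drop (n - m)
    · obtain ⟨m, hm, hm', he⟩ := c1
      have hmn : m ≤ n := by
        have := congrArg List.length he
        simp at this
        omega
      set X := us.take (us.length - n) |>.take (us.length - n - m) with hX
      set Y := (us.drop (us.length - n)).drop (n - m) with hY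
      set Z := (us.drop (us.length - n)).take (n - m) with hZ
      have hus : us = X ++ ((Y ++ Z) ++ Y) := by
        have e1 : us = us.take (us.length - n) ++ us.drop (us.length - n) :=
          (List.take_append_drop _ _).symm
        have e2 : us.take (us.length - n) = X ++ Y := by
          rw [← he, hX, List.take_append_drop]
        have e3 : us.drop (us.length - n) = Z ++ Y := by
          rw [hZ, hY, List.take_append_drop]
        rw [e1, e2, e3]; simp
      have hYl : Y.length = m := by simp [hY]; omega
      have hZl : Z.length = n - m := by simp [hZ]; omega
      have hXl : X.length = us.length - n - m := by simp [hX]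
      have d := deriv_prefix X (d_ax4 Y Z (by intro h; rw [h] at hYl; simp at hYl; omega))
      rw [← T_append, ← T_append, ← hus] at d
      have hnn : Y.length + Z.length = n := by omega
      rw [hnn] at d
      obtain ⟨vs, q, h1, h2, h3, h4⟩ := ih (X ++ (Y ++ Z)).length
        (by simp; omega) (X ++ (Y ++ Z)) n hn (by simp; omega) rfl
      exact ⟨vs, q, h1, h2, h3, d.symm.trans h4⟩
    · by_cases c2 : ∃ (m : ℕ) (s : List (PrimInstr A)), 2 ≤ m ∧
          us.drop (us.length - n) = listPow s m
      · obtain ⟨m, s, hm, he⟩ := c2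
        have hlen : n = m * s.length := by
          have := congrArg List.length he
          rw [listPow_length, List.length_drop] at this
          omega
        have hs : 1 ≤ s.length := by
          rcases Nat.eq_zero_or_pos s.length with h | h
          · rw [h] at hlen; omega
          · exact h
        set X := us.take (us.length - n) with hX
        have hus : us = X ++ listPow s m := by rw [← he, hX, List.take_append_drop]
        have hXl : X.length = us.length - n := by simp [hX]
        have d := deriv_prefix X (d_ax2 s (by intro h; simp [h] at hs) m (by omega))
        rw [← T_append, ← T_append, ← hus, ← hlen] at d
        have hlt : s.length < n := by nlinarith
        obtain ⟨vs, q, h1, h2, h3, h4⟩ := ih (X ++ s).length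
          (by simp; omega) (X ++ s) s.length hs (by simp) rfl
        exact ⟨vs, q, h1, h2, h3, d.symm.trans h4⟩
      · exact ⟨us, n, hn, hk, ⟨c1, c2⟩, .refl _⟩

theorem primsOf_map (us : List (PrimInstr A)) : primsOf (us.map Instr.prim) = us := by
  induction us with
  | nil => rfl
  | cons u us ih => simpa [primsOf] using ih

theorem kDen_map (us : List (PrimInstr A)) :
    kDen (us.map Instr.prim) = fun p => us[p]? := by
  have h : repOf (us.map Instr.prim) = none := by
    unfold repOf
    rw [List.getLast?_map]
    cases us.getLast? <;> rfl
  unfold kDen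
  rw [h, primsOf_map]

theorem kDen_rep (us : List (PrimInstr A)) (n : ℕ) :
    kDen (us.map Instr.prim ++ [Instr.rep n]) = kAt us n := by
  have h : repOf (us.map Instr.prim ++ [Instr.rep n]) = some n := by
    simp [repOf]
  have h2 : primsOf (us.map Instr.prim ++ [Instr.rep n]) = us := by
    have := primsOf_map us
    unfold primsOf at this ⊢
    rw [List.filterMap_append, this]; simp
  unfold kDen
  rw [h, h2]

/-- a period of the SPI denoted by a K-program -/
def period (l : List (Instr A)) : ℕ := (repOf l).getD 1

theorem kDen_per (Q : LTerm A) (hQ : IsKProg Q) : 1 ≤ period Q.flat ∧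
    ∀ p, Q.flat.length ≤ p → kDen Q.flat (p + period Q.flat) = kDen Q.flat p := by
  rcases hQ with ⟨u, us, h⟩ | ⟨u, us, n, h, h1, h2⟩
  · have hr : repOf Q.flat = none := by
      rw [h]; unfold repOf
      rw [List.getLast?_map]
      cases (u :: us).getLast? <;> rfl
    refine ⟨by simp [period, hr], fun p hp => ?_⟩
    rw [h] at hp ⊢
    rw [List.length_map] at hp
    rw [kDen_map]
    simp only
    rw [List.getElem?_eq_none (by omega), List.getElem?_eq_none (by omega)]
  · have hr : period Q.flat = n := by
      rw [h]; unfold period repOf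
      rw [List.getLast?_concat]; rfl
    rw [hr]
    refine ⟨h1, fun p hp => ?_⟩
    rw [h] at hp ⊢
    rw [List.length_append, List.length_map] at hp
    rw [kDen_rep]
    exact kAt_per _ _ _ h2 (by omega)

/-- The (computable) decision procedure: compare finitely many positions. -/
def decideCong [DecidableEq A] (Q R : LTerm A) : Bool :=
  decide (∀ p < Q.flat.length + R.flat.length + period Q.flat * period R.flat,
    kDen Q.flat p = kDen R.flat p)

theorem decideCong_iff [DecidableEq A] (Q R : LTerm A) (hQ : IsKProg Q) (hR : IsKProg R) :
    decideCong Q R = true ↔ kDen Q.flat = kDen R.flat := by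
  obtain ⟨a1, a2⟩ := kDen_per Q hQ
  obtain ⟨b1, b2⟩ := kDen_per R hR
  unfold decideCong
  rw [decide_eq_true_iff]
  constructor
  · intro h
    refine eq_of_agree (a := Q.flat.length + R.flat.length) (Nat.mul_pos a1 b1) ?_ ?_ h
    · intro p hp; exact per_mul a2 _ p (by omega)
    · intro p hp; rw [Nat.mul_comm]; exact per_mul b2 _ p (by omega)
  · intro h p _; rw [h]

theorem exists_form (P : LTerm A) (hP : IsKProg P) :
    ∃ c : List (PrimInstr A) × Option ℕ,
      IsKData c ∧ MinKData c ∧ DerivLspc P (ofData c.1 c.2) := by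
  rcases hP with ⟨u, us, h⟩ | ⟨u, us, n, h, h1, h2⟩
  · refine ⟨(u :: us, none), ⟨by simp, trivial⟩, trivial, deriv_of_flat ?_⟩
    rw [h]; exact (flat_ofPrims _ (by simp)).symm
  · obtain ⟨vs, m, g1, g2, g3, g4⟩ := exists_min (u :: us) n h1 h2
    refine ⟨(vs, some m), ⟨?_, g1, g2⟩, g3, .trans (deriv_of_flat ?_) g4⟩
    · rintro h0
      simp only at h0
      subst h0
      simp at g2; omega
    · rw [h, flat_pcat]; rfl

theorem form_unique {c d : List (PrimInstr A) × Option ℕ} (hc : IsKData c) (hd : IsKData d)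
    (mc : MinKData c) (md : MinKData d) (h : DerivLspc (ofData c.1 c.2) (ofData d.1 d.2)) :
    c = d := by
  have r := sound h
  rw [flat_ofData c hc.1, flat_ofData d hd.1, dataL_flatData, dataL_flatData] at r
  rcases r with r | ⟨n, m, h1, h2, h3, h4, h5, h6, h7⟩
  · exact r
  · obtain ⟨us, r⟩ := c
    obtain ⟨vs, s⟩ := d
    simp only at h1 h2
    subst h1 h2
    obtain ⟨rfl, rfl⟩ := min_unique h3 h4 h5 h6 mc md h7
    rfl

end KForm

/-- In `L_spc`, every `K`-program can be rewritten into a unique minimal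
`K`-program; consequently, single-pass congruence of `K`-programs is decidable
(assuming decidable equality on the basic instructions). -/
theorem unique_minimal_K_form_and_decidability (A : Type) (P : LTerm A)
    (hP : IsKProg P) :
    (∃! c : List (PrimInstr A) × Option ℕ,
        IsKData c ∧ MinKData c ∧ DerivLspc P (ofData c.1 c.2)) ∧
    (∀ _ : DecidableEq A, ∃ f : LTerm A → LTerm A → Bool,
        ∀ Q R : LTerm A, IsKProg Q → IsKProg R →
          (f Q R = true ↔ kDen Q.flat = kDen R.flat)) := by
  refine ⟨?_, fun _ => ⟨KForm.decideCong, fun Q R hQ hR => KForm.decideCong_iff Q R hQ hR⟩⟩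
  obtain ⟨c, hc, mc, dc⟩ := KForm.exists_form P hP
  refine ⟨c, ⟨hc, mc, dc⟩, ?_⟩
  rintro d ⟨hd, md, dd⟩
  exact KForm.form_unique hd hc md mc (dd.symm.trans dc)
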